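/- arXiv:2601.13805 — 2 statements merged into one kernel-verified Lean document; each statement's English description precedes it below -/
import Mathlib

section
/- Let I be a P-ideal on ℕ, let X be a metric space with the UC-property, and let 𝓕 be a rough family on X all of whose members are closed sets. Then Lim_x(I*,𝓕) = Lim_x(I,𝓕) for every sequence x : ℕ → X. -/
open Set Filter Topology Metric

def IsIdeal (I : Set (Set ℕ)) : Prop :=
  (∀ A B : Set ℕ, A ⊆ B → B ∈ I → A ∈ I) ∧
  (∀ A B : Set ℕ, A ∈ I → B ∈ I → A ∪ B ∈ I) ∧
  (∀ A : Set ℕ, A.Finite → A ∈ I) ∧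
  (Set.univ : Set ℕ) ∉ I

def IsRoughFamily {X : Type*} (F : X → Set X) : Prop :=
  ∀ η : X, η ∈ F η

def RoughLim {X : Type*} [TopologicalSpace X] (I : Set (Set ℕ)) (F : X → Set X)
    (x : ℕ → X) : Set X :=
  {η : X | ∀ U : Set X, IsOpen U → F η ⊆ U → {n : ℕ | x n ∉ U} ∈ I}

def RoughLimStar {X : Type*} [TopologicalSpace X] (I : Set (Set ℕ)) (F : X → Set X)
    (x : ℕ → X) : Set X :=
  {η : X | ∃ S ∈ I, ∀ U : Set X, IsOpen U → F η ⊆ U → {n : ℕ | n ∉ S ∧ x n ∉ U}.Finite}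

def RoughCluster {X : Type*} [TopologicalSpace X] (I : Set (Set ℕ)) (F : X → Set X)
    (x : ℕ → X) : Set X :=
  {η : X | ∀ U : Set X, IsOpen U → F η ⊆ U → {n : ℕ | x n ∈ U} ∉ I}

def RoughLimitPts {X : Type*} [TopologicalSpace X] (I : Set (Set ℕ)) (F : X → Set X)
    (x : ℕ → X) : Set X :=
  {η : X | ∃ S : Set ℕ, S ∉ I ∧ ∀ U : Set X, IsOpen U → F η ⊆ U → {n ∈ S | x n ∉ U}.Finite}

def IClusterPts {X : Type*} [TopologicalSpace X] (I : Set (Set ℕ)) (x : ℕ → X) : Set X :=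
  RoughCluster I (fun η => {η}) x

def ILimitPts {X : Type*} [TopologicalSpace X] (I : Set (Set ℕ)) (x : ℕ → X) : Set X :=
  RoughLimitPts I (fun η => {η}) x

def IsPIdeal (I : Set (Set ℕ)) : Prop :=
  ∀ S : ℕ → Set ℕ, Monotone S → (∀ j, S j ∈ I) → ∃ T ∈ I, ∀ j, (S j \ T).Finite

def IsPPlusIdeal (I : Set (Set ℕ)) : Prop :=
  ∀ A : ℕ → Set ℕ, Antitone A → (∀ k, A k ∉ I) → ∃ B : Set ℕ, B ∉ I ∧ ∀ k, (B \ A k).Finite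

def HasUCProperty (X : Type*) [MetricSpace X] : Prop :=
  ∀ F G : Set X, IsClosed F → IsClosed G → F.Nonempty → G.Nonempty → Disjoint F G →
    ∃ ε : ℝ, 0 < ε ∧ ∀ x ∈ F, ∀ y ∈ G, ε < dist x y

def UpperVietorisContinuous {X : Type*} [TopologicalSpace X] (F : X → Set X) : Prop :=
  ∀ η : X, ∀ U : Set X, IsOpen U → F η ⊆ U →
    ∃ V : Set X, IsOpen V ∧ η ∈ V ∧ ∀ lam ∈ V, F lam ⊆ U

/-!
Both notions of rough convergence to `η` are convergence along a filter on `ℕ` to the neighbourhood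
filter of the set `F η`: along the filter dual to `I`, respectively along the cofinite filter
restricted to the complement of some `S ∈ I`. If the target filter has a countable decreasing basis,
then applying the P-ideal property to the exceptional sets of its members produces a single `S`
that serves all of them. In a space with the UC-property the thickenings of a closed set form a
basis of its neighbourhood filter, which is therefore countably generated.
-/

namespace IsIdeal

variable {I : Set (Set ℕ)}

/-- The filter dual to an ideal `I` on `ℕ`, consisting of the complements of the members of `I`.
Convergence along it is `I`-convergence. -/
def dualFilter (hI : IsIdeal I) : Filter ℕ :=
  comk (· ∈ I) (hI.2.2.1 ∅ finite_empty) (fun B hB A hAB => hI.1 A B hAB hB)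
    fun A hA B hB => hI.2.1 A B hA hB

theorem mem_dualFilter (hI : IsIdeal I) {A : Set ℕ} : A ∈ hI.dualFilter ↔ Aᶜ ∈ I :=
  Iff.rfl

theorem dualFilter_le_cofinite_inf_principal_compl (hI : IsIdeal I) {S : Set ℕ} (hS : S ∈ I) :
    hI.dualFilter ≤ cofinite ⊓ 𝓟 Sᶜ :=
  le_inf (fun A hA => hI.2.2.1 Aᶜ hA) <|
    le_principal_iff.mpr <| compl_mem_comk.mpr hS

end IsIdeal

theorem IsPIdeal.exists_tendsto_cofinite_inf_principal_compl {α : Type*} {I : Set (Set ℕ)}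
    (hP : IsPIdeal I) (hI : IsIdeal I) {l : Filter α} [l.IsCountablyGenerated] {x : ℕ → α}
    (hx : Tendsto x hI.dualFilter l) : ∃ S ∈ I, Tendsto x (cofinite ⊓ 𝓟 Sᶜ) l := by
  obtain ⟨B, hB⟩ := l.exists_antitone_basis
  have exceptional_mono : Monotone fun j => (x ⁻¹' B j)ᶜ := fun _ _ hij =>
    compl_subset_compl.mpr (preimage_mono (hB.antitone hij))
  have exceptional_mem (j : ℕ) : (x ⁻¹' B j)ᶜ ∈ I := hI.mem_dualFilter.mp (hx (hB.mem j))
  obtain ⟨S, hS, hfin⟩ := hP _ exceptional_mono exceptional_mem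
  refine ⟨S, hS, hB.tendsto_right_iff.mpr fun j _ => ?_⟩
  refine eventually_inf_principal.mpr ((hfin j).subset fun n hn => ?_)
  simpa [and_comm] using hn

section RoughConvergence

variable {X : Type*} [TopologicalSpace X] {I : Set (Set ℕ)} {F : X → Set X} {x : ℕ → X} {η : X}

theorem mem_roughLim_iff_tendsto (hI : IsIdeal I) :
    η ∈ RoughLim I F x ↔ Tendsto x hI.dualFilter (𝓝ˢ (F η)) := by
  simp only [(hasBasis_nhdsSet (F η)).tendsto_right_iff, and_imp]
  rfl

theorem mem_roughLimStar_iff_exists_tendsto :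
    η ∈ RoughLimStar I F x ↔ ∃ S ∈ I, Tendsto x (cofinite ⊓ 𝓟 Sᶜ) (𝓝ˢ (F η)) := by
  simp only [(hasBasis_nhdsSet (F η)).tendsto_right_iff, and_imp, eventually_inf_principal,
    eventually_cofinite, mem_compl_iff, Classical.not_imp]
  rfl

theorem roughLimStar_subset_roughLim (hI : IsIdeal I) : RoughLimStar I F x ⊆ RoughLim I F x := by
  intro η hη
  obtain ⟨S, hS, hx⟩ := mem_roughLimStar_iff_exists_tendsto.mp hη
  exact (mem_roughLim_iff_tendsto hI).mpr
    (hx.mono_left (hI.dualFilter_le_cofinite_inf_principal_compl hS))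

end RoughConvergence

namespace HasUCProperty

variable {X : Type*} [MetricSpace X] {s : Set X}

theorem exists_thickening_subset (hUC : HasUCProperty X) (hs : IsClosed s) {U : Set X}
    (hU : IsOpen U) (hsU : s ⊆ U) : ∃ ε > 0, thickening ε s ⊆ U := by
  rcases s.eq_empty_or_nonempty with rfl | hne
  · exact ⟨1, one_pos, by simp⟩
  rcases Uᶜ.eq_empty_or_nonempty with hUc | hUc
  · exact ⟨1, one_pos, by simp [compl_empty_iff.mp hUc]⟩
  obtain ⟨ε, hε, hdist⟩ :=
    hUC s Uᶜ hs hU.isClosed_compl hne hUc (disjoint_compl_right_iff_subset.mpr hsU)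
  refine ⟨ε, hε, fun y hy => by_contra fun hyU => ?_⟩
  obtain ⟨z, hz, hyz⟩ := mem_thickening_iff.mp hy
  exact (hdist z hz y hyU).not_gt (dist_comm y z ▸ hyz)

theorem hasBasis_nhdsSet_thickening (hUC : HasUCProperty X) (hs : IsClosed s) :
    (𝓝ˢ s).HasBasis (fun _ : ℕ => True) fun n => thickening (1 / ((n : ℝ) + 1)) s := by
  refine (hasBasis_nhdsSet s).to_hasBasis (fun U ⟨hU, hsU⟩ => ?_) fun n _ =>
    ⟨_, ⟨isOpen_thickening, self_subset_thickening Nat.one_div_pos_of_nat s⟩, Subset.rfl⟩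
  obtain ⟨ε, hε, hεU⟩ := hUC.exists_thickening_subset hs hU hsU
  obtain ⟨n, hn⟩ := exists_nat_one_div_lt hε
  exact ⟨n, trivial, (thickening_mono hn.le s).trans hεU⟩

theorem isCountablyGenerated_nhdsSet (hUC : HasUCProperty X) (hs : IsClosed s) :
    (𝓝ˢ s).IsCountablyGenerated :=
  (hUC.hasBasis_nhdsSet_thickening hs).isCountablyGenerated

end HasUCProperty

theorem stmt1_general {X : Type*} [TopologicalSpace X] {I : Set (Set ℕ)} (hI : IsIdeal I)
    (hP : IsPIdeal I) {F : X → Set X} (hF : ∀ η, (𝓝ˢ (F η)).IsCountablyGenerated) (x : ℕ → X) :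
    RoughLimStar I F x = RoughLim I F x := by
  refine (roughLimStar_subset_roughLim hI).antisymm fun η hη => ?_
  have := hF η
  exact mem_roughLimStar_iff_exists_tendsto.mpr
    (hP.exists_tendsto_cofinite_inf_principal_compl hI ((mem_roughLim_iff_tendsto hI).mp hη))

theorem stmt1 {X : Type*} [MetricSpace X] (hUC : HasUCProperty X)
    (I : Set (Set ℕ)) (hI : IsIdeal I) (hP : IsPIdeal I)
    (F : X → Set X) (hF : IsRoughFamily F) (hFcl : ∀ η : X, IsClosed (F η)) :
    ∀ x : ℕ → X, RoughLimStar I F x = RoughLim I F x := by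
  exact stmt1_general hI hP fun η => hUC.isCountablyGenerated_nhdsSet (hFcl η)
end

section
/- Let X = ℝ with its standard topology, let I be an ideal on ℕ, let r : ℝ → [0,∞) be a bounded upper semicontinuous function, and let 𝓕 be the rough family given by F_η = [η − r(η), η + r(η)] for all η ∈ ℝ. Then the map x ↦ Γ_x(I,𝓕) from ℓ∞ to the nonempty closed subsets of ℝ is continuous for the upper Vietoris topology: for every x ∈ ℓ∞ and every open set U ⊆ ℝ with Γ_x(I,𝓕) ⊆ U, there exists ε > 0 such that Γ_y(I,𝓕) ⊆ U for all y ∈ ℓ∞ with ‖x − y‖_∞ < ε. -/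
open Set Filter Topology Metric

/-!
Let `η ∉ Γ_x`, witnessed by an open `V ⊇ F_η`. As `F_η` is compact, `V` contains a uniform
thickening of it, so a slightly smaller thickening still excludes `λ` from `Γ_y` for all `λ` near
`η` and all `y` uniformly near `x`. On the other hand `F_λ` must meet the closure of the range of
`y` whenever `λ ∈ Γ_y`, which confines `Γ_y` to one compact set `K` for all `y` near `x`. The tube
lemma on `K \ U` makes the local exclusions uniform.
-/

open Bornology

namespace IsIdeal

variable {I : Set (Set ℕ)}

theorem isLowerSet (hI : IsIdeal I) : IsLowerSet I :=
  fun A B hBA hA => hI.1 B A hBA hA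

theorem empty_mem (hI : IsIdeal I) : ∅ ∈ I :=
  hI.2.2.1 ∅ finite_empty

end IsIdeal

theorem UpperVietorisContinuous.eventually_subset {X : Type*} [TopologicalSpace X] {F : X → Set X}
    (hF : UpperVietorisContinuous F) {η : X} {U : Set X} (hU : IsOpen U) (hηU : F η ⊆ U) :
    ∀ᶠ ξ in 𝓝 η, F ξ ⊆ U := by
  obtain ⟨V, hV, hηV, hVU⟩ := hF η U hU hηU
  exact mem_of_superset (hV.mem_nhds hηV) hVU

section ClosedBalls

variable {X : Type*} [PseudoMetricSpace X] {r : X → ℝ}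

theorem exists_pos_closedBall_add_subset [ProperSpace X] {η : X} {R : ℝ} {U : Set X}
    (hU : IsOpen U) (hRU : closedBall η R ⊆ U) : ∃ δ > 0, closedBall η (R + δ) ⊆ U := by
  obtain hempty | hnonempty := (closedBall η (R + 1) \ U).eq_empty_or_nonempty
  · exact ⟨1, one_pos, sdiff_eq_empty.mp hempty⟩
  obtain ⟨z, ⟨-, hzU⟩, hz⟩ := ((isCompact_closedBall η (R + 1)).diff hU).exists_isMinOn hnonempty
    (continuous_id.dist continuous_const : Continuous fun ξ => dist ξ η).continuousOn
  have hRz : R < dist z η := not_le.mp fun h => hzU (hRU h)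
  obtain ⟨δ, hδ, hδz⟩ := exists_between (lt_min (sub_pos.mpr hRz) one_pos)
  obtain ⟨hδz, hδ1⟩ := lt_min_iff.mp hδz
  refine ⟨δ, hδ, fun ξ hξ => by_contra fun hξU => ?_⟩
  have hzξ : dist z η ≤ dist ξ η := hz ⟨closedBall_subset_closedBall (by gcongr) hξ, hξU⟩
  linarith [mem_closedBall.mp hξ]

theorem upperVietorisContinuous_closedBall [ProperSpace X] (hr : UpperSemicontinuous r) :
    UpperVietorisContinuous fun η => closedBall η (r η) := by
  intro η U hU hηU
  obtain ⟨δ, hδ, hδU⟩ := exists_pos_closedBall_add_subset hU hηU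
  refine ⟨r ⁻¹' Iio (r η + δ / 2) ∩ ball η (δ / 2), (hr.isOpen_preimage _).inter isOpen_ball,
    ⟨by simpa using hδ, mem_ball_self (half_pos hδ)⟩, ?_⟩
  rintro ξ ⟨hrξ, hξη⟩
  refine (closedBall_subset_closedBall' ?_).trans hδU
  linarith [mem_Iio.mp (mem_preimage.mp hrξ), mem_ball.mp hξη]

theorem isBounded_setOf_closedBall_inter_nonempty (hr : ∃ M, ∀ η, r η ≤ M) {s : Set X}
    (hs : IsBounded s) : IsBounded {η | (closedBall η (r η) ∩ s).Nonempty} := by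
  obtain ⟨M, hM⟩ := hr
  refine (hs.cthickening (δ := M)).subset ?_
  rintro η ⟨z, hzη, hzs⟩
  exact mem_cthickening_of_dist_le η z M s hzs ((mem_closedBall'.mp hzη).trans (hM η))

end ClosedBalls

section RoughCluster

variable {X : Type*} {I : Set (Set ℕ)} {F : X → Set X}

theorem inter_nonempty_of_mem_roughCluster [TopologicalSpace X] (hI : ∅ ∈ I) {y : ℕ → X}
    {C : Set X} (hC : IsClosed C) (hy : ∀ n, y n ∈ C) {η : X} (hη : η ∈ RoughCluster I F y) :
    (F η ∩ C).Nonempty := by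
  by_contra hFC
  have hFCc : F η ⊆ Cᶜ := fun z hzF hzC => hFC ⟨z, hzF, hzC⟩
  exact hη Cᶜ hC.isOpen_compl hFCc (by simpa [hy] using hI)

variable [PseudoMetricSpace X] {ι : Type*} {l : Filter ι} {x : ι → ℕ → X} {x₀ : ℕ → X}

theorem eventually_notMem_roughCluster (hI : IsLowerSet I) (hF : UpperVietorisContinuous F)
    (hx : TendstoUniformly x x₀ l) {η : X} (hFη : IsCompact (F η))
    (hη : η ∉ RoughCluster I F x₀) : ∀ᶠ p in l ×ˢ 𝓝 η, p.2 ∉ RoughCluster I F (x p.1) := by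
  obtain ⟨V, hV, hFV, hVI⟩ : ∃ V, IsOpen V ∧ F η ⊆ V ∧ {n | x₀ n ∈ V} ∈ I := by
    simpa [RoughCluster] using hη
  obtain ⟨δ, hδ, hδV⟩ := hFη.exists_thickening_subset_open hV hFV
  have hFnear : ∀ᶠ ξ in 𝓝 η, F ξ ⊆ thickening (δ / 2) (F η) :=
    hF.eventually_subset isOpen_thickening (self_subset_thickening (half_pos hδ) _)
  have hxnear : ∀ᶠ i in l, ∀ n, dist (x₀ n) (x i n) < δ / 2 :=
    Metric.tendstoUniformly_iff.mp hx _ (half_pos hδ)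
  filter_upwards [hxnear.prod_mk hFnear] with ⟨i, ξ⟩ ⟨hxi, hFξ⟩ hξ
  refine hξ _ isOpen_thickening hFξ (hI (fun n hn => hδV ?_) hVI)
  obtain ⟨z, hzF, hz⟩ := mem_thickening_iff.mp hn
  exact mem_thickening_iff.mpr ⟨z, hzF, by linarith [dist_triangle (x₀ n) (x i n) z, hxi n]⟩

theorem exists_isCompact_eventually_roughCluster_subset [ProperSpace X] (hI : ∅ ∈ I)
    (hF : ∀ s, IsBounded s → IsBounded {η | (F η ∩ s).Nonempty})
    (hx₀ : IsBounded (range x₀)) (hx : TendstoUniformly x x₀ l) :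
    ∃ K, IsCompact K ∧ ∀ᶠ i in l, RoughCluster I F (x i) ⊆ K := by
  refine ⟨_, (hF _ (hx₀.cthickening (δ := 1))).isCompact_closure, ?_⟩
  filter_upwards [Metric.tendstoUniformly_iff.mp hx 1 one_pos] with i hxi η hη
  have hrange : ∀ n, x i n ∈ cthickening 1 (range x₀) := fun n =>
    mem_cthickening_of_dist_le _ _ _ _ (mem_range_self n) (dist_comm (x i n) _ ▸ (hxi n).le)
  exact subset_closure (inter_nonempty_of_mem_roughCluster hI isClosed_cthickening hrange hη)

theorem eventually_roughCluster_subset [ProperSpace X] (hI : IsLowerSet I) (hI₀ : ∅ ∈ I)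
    (hFcompact : ∀ η, IsCompact (F η)) (hFcont : UpperVietorisContinuous F)
    (hFbdd : ∀ s, IsBounded s → IsBounded {η | (F η ∩ s).Nonempty})
    (hx₀ : IsBounded (range x₀)) (hx : TendstoUniformly x x₀ l)
    {U : Set X} (hU : IsOpen U) (hx₀U : RoughCluster I F x₀ ⊆ U) :
    ∀ᶠ i in l, RoughCluster I F (x i) ⊆ U := by
  obtain ⟨K, hK, hxK⟩ := exists_isCompact_eventually_roughCluster_subset hI₀ hFbdd hx₀ hx
  have hlocal : ∀ η ∈ K \ U, ∀ᶠ p in l ×ˢ 𝓝 η, p.2 ∉ RoughCluster I F (x p.1) := fun η hη =>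
    eventually_notMem_roughCluster hI hFcont hx (hFcompact η) fun hηx => hη.2 (hx₀U hηx)
  have htube : ∀ᶠ p in l ×ˢ 𝓝ˢ (K \ U), p.2 ∉ RoughCluster I F (x p.1) :=
    (hK.diff hU).mem_prod_nhdsSet_of_forall hlocal
  have huniform : ∀ᶠ i in l, ∀ η ∈ K \ U, η ∉ RoughCluster I F (x i) :=
    htube.curry.mono fun i hi => hi.self_of_nhdsSet
  filter_upwards [hxK, huniform] with i hiK hiU η hη
  exact by_contra fun hηU => hiU η ⟨hiK hη, hηU⟩ hη

end RoughCluster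

theorem dist_apply_le_dist_lp_top {ι : Type*} {E : ι → Type*} [∀ i, NormedAddCommGroup (E i)]
    (x y : lp E ⊤) (i : ι) : dist (x i) (y i) ≤ dist x y := by
  simpa only [dist_eq_norm, lp.coeFn_sub, Pi.sub_apply] using
    lp.norm_apply_le_norm ENNReal.top_ne_zero (x - y) i

theorem stmt18_general {E : Type*} [NormedAddCommGroup E] [ProperSpace E] {I : Set (Set ℕ)}
    (hI : IsLowerSet I) (hI₀ : ∅ ∈ I) {F : E → Set E} (hFcompact : ∀ η, IsCompact (F η))
    (hFcont : UpperVietorisContinuous F)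
    (hFbdd : ∀ s, IsBounded s → IsBounded {η | (F η ∩ s).Nonempty})
    (x : lp (fun _ : ℕ => E) ⊤) (U : Set E) (hU : IsOpen U)
    (hxU : RoughCluster I F (fun n => x n) ⊆ U) :
    ∃ ε : ℝ, 0 < ε ∧ ∀ y : lp (fun _ : ℕ => E) ⊤, ‖x - y‖ < ε →
      RoughCluster I F (fun n => y n) ⊆ U := by
  have hrange : IsBounded (range fun n => x n) :=
    isBounded_iff_forall_norm_le.mpr
      ⟨‖x‖, forall_mem_range.mpr (lp.norm_apply_le_norm ENNReal.top_ne_zero x)⟩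
  have hunif : TendstoUniformly (fun (y : lp (fun _ : ℕ => E) ⊤) n => y n) (fun n => x n) (𝓝 x) :=
    Metric.tendstoUniformly_iff.mpr fun ε hε => mem_of_superset (ball_mem_nhds x hε)
      fun y hy n => (dist_apply_le_dist_lp_top x y n).trans_lt (mem_ball'.mp hy)
  obtain ⟨ε, hε, hball⟩ := Metric.eventually_nhds_iff.mp
    (eventually_roughCluster_subset hI hI₀ hFcompact hFcont hFbdd hrange hunif hU hxU)
  exact ⟨ε, hε, fun y hy => hball (by rwa [dist_comm, dist_eq_norm])⟩

theorem stmt18 (I : Set (Set ℕ)) (hI : IsIdeal I)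
    (r : ℝ → ℝ) (hr0 : ∀ η : ℝ, 0 ≤ r η) (hrbd : ∃ M : ℝ, ∀ η : ℝ, r η ≤ M)
    (hr : UpperSemicontinuous r)
    (F : ℝ → Set ℝ) (hF : ∀ η : ℝ, F η = Set.Icc (η - r η) (η + r η)) :
    ∀ x : lp (fun _ : ℕ => ℝ) ⊤,
      ∀ U : Set ℝ, IsOpen U → RoughCluster I F (fun n => x n) ⊆ U →
        ∃ ε : ℝ, 0 < ε ∧ ∀ y : lp (fun _ : ℕ => ℝ) ⊤, ‖x - y‖ < ε →
          RoughCluster I F (fun n => y n) ⊆ U := by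
  obtain rfl : F = fun η => closedBall η (r η) :=
    funext fun η => (hF η).trans Real.closedBall_eq_Icc.symm
  exact stmt18_general hI.isLowerSet hI.empty_mem (fun η => isCompact_closedBall η (r η))
    (upperVietorisContinuous_closedBall hr) fun _ => isBounded_setOf_closedBall_inter_nonempty hrbd
end
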